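/- arXiv:1111.7106 — 3 statements merged into one kernel-verified Lean document; each statement's English description precedes it below -/
import Mathlib

section
/- Let X be a càdlàg function from [0,∞) to ℝⁿ and let a ∈ [0,∞)ⁿ. Let (Wᵃ, Lᵃ) be a solution pair of the Skorohod problem for a + X and let (W⁰, L⁰) be a solution pair of the Skorohod problem for X. Then the limit lim_{t→∞} (Wᵃ(t) − W⁰(t)) exists in ℝⁿ and is coordinatewise nonnegative. -/
/-!
Put `M = L⁰ - Lᵃ`, `D = Wᵃ - W⁰`, `Q = Pᵗ`, so that `D = a + Q M - M` on `[0, ∞)`. The heart of the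
matter is that `D ≥ 0` and that `M` is nondecreasing with `M ≥ 0`. Given this, `M ≤ a + Q M`, which
iterates to `M ≤ ∑_{j<k} Qʲ a + Qᵏ M`; for `k` with `Qᵏ` small this bounds `M`, so `M` converges,
and with it `D`.

The monotonicity is obtained by improving an error bound. Let `B ≥ 0` be a nondecreasing vector
function such that `M + B` is nondecreasing; `B = Lᵃ` is one. Coordinate `i` is a pair of
one-dimensional Skorohod problems whose inputs differ by `E = a_i + (Q M)_i`, and `E + (Q B)_i` is
nondecreasing. The one-dimensional comparison says that then both `(Q B)_i - D_i⁻` and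
`M_i + (Q B)_i - D_i⁻` are nondecreasing. So `Q B - D⁻ ≤ Q B` may replace `B`, and
`D⁻ ≤ Q B`. After `k` rounds the error is at most `Qᵏ Lᵃ`, which tends to zero.

All functions are extended by zero to negative times, so that a possible atom of `dL` at time zero
is an ordinary jump, and monotonicity on `ℝ` includes nonnegativity.
-/

open MeasureTheory Filter Topology

open Classical in
noncomputable def lsMeasure (f : ℝ → ℝ) : Measure ℝ :=
  if h : Monotone f ∧ ∀ x, ContinuousWithinAt f (Set.Ici x) x then
    StieltjesFunction.measure ⟨f, h.1, h.2⟩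
  else 0

noncomputable def extZero (f : ℝ → ℝ) : ℝ → ℝ := fun t => if t < 0 then 0 else f t

def Cadlag {n : ℕ} (X : ℝ → Fin n → ℝ) : Prop :=
  (∀ t : ℝ, 0 ≤ t → ContinuousWithinAt X (Set.Ici t) t) ∧
  (∀ t : ℝ, 0 < t → ∃ l : Fin n → ℝ, Filter.Tendsto X (nhdsWithin t (Set.Iio t)) (nhds l))

structure IsSolutionPair {n : ℕ} (R : Matrix (Fin n) (Fin n) ℝ)
    (X W L : ℝ → Fin n → ℝ) : Prop where
  eqn : ∀ t : ℝ, 0 ≤ t → W t = X t + R.mulVec (L t)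
  nonnegL : ∀ (i : Fin n) (t : ℝ), 0 ≤ t → 0 ≤ L t i
  monoL : ∀ i : Fin n, MonotoneOn (fun t => L t i) (Set.Ici (0 : ℝ))
  rcL : ∀ (i : Fin n) (t : ℝ), 0 ≤ t → ContinuousWithinAt (fun s => L s i) (Set.Ici t) t
  nonnegW : ∀ (i : Fin n) (t : ℝ), 0 ≤ t → 0 ≤ W t i
  flat : ∀ i : Fin n, lsMeasure (extZero fun t => L t i) {t : ℝ | 0 ≤ t ∧ 0 < W t i} = 0

/-! ### Complementarity in one dimension -/

lemma extZero_monotone {L : ℝ → ℝ} (h0 : ∀ t, 0 ≤ t → 0 ≤ L t)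
    (hm : MonotoneOn L (Set.Ici (0 : ℝ))) : Monotone (extZero L) := by
  intro s t hst
  unfold extZero
  split_ifs with h1 h2 h2
  · exact le_rfl
  · exact h0 t (not_lt.1 h2)
  · linarith
  · exact hm (not_lt.1 h1) (not_lt.1 h2) hst

lemma extZero_rightCont {L : ℝ → ℝ}
    (hr : ∀ t, 0 ≤ t → ContinuousWithinAt L (Set.Ici t) t) (t : ℝ) :
    ContinuousWithinAt (extZero L) (Set.Ici t) t := by
  by_cases h : t < 0
  · have : extZero L =ᶠ[𝓝 t] fun _ => (0 : ℝ) := by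
      filter_upwards [Iio_mem_nhds h] with u hu
      exact if_pos hu
    exact (continuousAt_const.congr this.symm).continuousWithinAt
  · push Not at h
    refine (hr t h).congr (fun u hu => ?_) ?_
    · exact if_neg (not_lt.2 (h.trans hu))
    · exact if_neg (not_lt.2 h)

/-- If `L` grows over `[s, t]`, then it nearly reaches its final value at some time of `[s, t]` at
which `W` vanishes. This is the only use made of the condition on the measure `dL`. -/
lemma exists_zero_of_flat {L W : ℝ → ℝ} (h0 : ∀ t, 0 ≤ t → 0 ≤ L t)
    (hm : MonotoneOn L (Set.Ici (0 : ℝ)))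
    (hr : ∀ t, 0 ≤ t → ContinuousWithinAt L (Set.Ici t) t)
    (hW : ∀ t, 0 ≤ t → 0 ≤ W t)
    (hf : lsMeasure (extZero L) {t : ℝ | 0 ≤ t ∧ 0 < W t} = 0)
    (s t ε : ℝ) (hε : 0 < ε) (hst : extZero L s < extZero L t) :
    ∃ u, s ≤ u ∧ u ≤ t ∧ extZero W u = 0 ∧ extZero L t - ε ≤ extZero L u := by
  have mono := extZero_monotone h0 hm
  have rc := extZero_rightCont hr
  have neg : ∀ u, u < 0 → extZero L u = 0 := fun u hu => if_pos hu
  have nn : 0 ≤ extZero L s := by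
    rcases lt_or_ge s 0 with h | h
    · exact (neg s h).ge
    · rw [← neg (-1) (by norm_num)]
      exact mono (by linarith)
  set f := extZero L with hfdef
  set c := max (f s) (f t - ε) with hc
  have hct : c < f t := max_lt hst (by linarith)
  have hcs : f s ≤ c := le_max_left _ _
  set S : Set ℝ := {u | c < f u} with hS
  have hlb : ∀ u ∈ S, s ≤ u ∧ 0 ≤ u := by
    intro u hu
    constructor
    · by_contra! h
      exact absurd (mono h.le) (not_le.2 (lt_of_le_of_lt hcs hu))
    · by_contra! h
      have : c < f u := hu
      rw [neg u h] at this
      linarith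
  have htS : t ∈ S := hct
  have hbdd : BddBelow S := ⟨s, fun u hu => (hlb u hu).1⟩
  -- the first passage time above the level `c`
  set v := sInf S with hv
  have hvt : v ≤ t := csInf_le hbdd htS
  have hsv : s ≤ v := le_csInf ⟨t, htS⟩ fun u hu => (hlb u hu).1
  have hv0 : 0 ≤ v := le_csInf ⟨t, htS⟩ fun u hu => (hlb u hu).2
  have hbelow : ∀ u, u < v → f u ≤ c := fun u hu => by
    by_contra! h
    exact absurd (csInf_le hbdd (show u ∈ S from h)) (not_le.2 hu)
  have habove : ∀ u, v < u → c < f u := fun u hu => by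
    obtain ⟨w, hw, hwu⟩ := exists_lt_of_csInf_lt ⟨t, htS⟩ hu
    exact lt_of_lt_of_le hw (mono hwu.le)
  have hfv : c ≤ f v := by
    have h1 : Tendsto f (𝓝[>] v) (𝓝 (f v)) := (rc v).mono_left
      (nhdsWithin_mono _ Set.Ioi_subset_Ici_self)
    refine ge_of_tendsto h1 ?_
    filter_upwards [self_mem_nhdsWithin] with u hu
    exact (habove u hu).le
  have hleft : Function.leftLim f v ≤ c := by
    refine le_of_tendsto (mono.tendsto_leftLim v) ?_
    filter_upwards [self_mem_nhdsWithin] with u hu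
    exact hbelow u hu
  -- `dL` charges `[v, t]`, including the atom that may sit at `v`
  have hpos : lsMeasure f (Set.Icc v t) ≠ 0 := by
    unfold lsMeasure
    rw [dif_pos ⟨mono, rc⟩, StieltjesFunction.measure_Icc]
    simp only [ne_eq, ENNReal.ofReal_eq_zero, not_le]
    change 0 < f t - Function.leftLim f v
    linarith
  have : ∃ u ∈ Set.Icc v t, W u ≤ 0 := by
    by_contra! h
    have hsub : Set.Icc v t ⊆ {t : ℝ | 0 ≤ t ∧ 0 < W t} :=
      fun u hu => ⟨hv0.trans hu.1, h u hu⟩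
    exact hpos (measure_mono_null hsub hf)
  obtain ⟨u, ⟨hu1, hu2⟩, hu⟩ := this
  have hu0 : 0 ≤ u := hv0.trans hu1
  refine ⟨u, hsv.trans hu1, hu2, ?_, (le_max_right _ _).trans (hfv.trans (mono hu1))⟩
  unfold extZero
  rw [if_neg (not_lt.2 hu0)]
  exact le_antisymm hu (hW u hu0)

section Comparison

variable {L1 L0 W1 W0 E B : ℝ → ℝ}

/-- The one-dimensional comparison, first half: the negative part `max (W0 - W1) 0` of the
difference grows at most as fast as the error `B`. While it is positive, `W0` is, so `L0` is
constant. -/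
lemma negPart_le
    (hL1 : Monotone L1) (hB : Monotone B)
    (hEB : Monotone fun t => E t + B t)
    (hW1 : ∀ t, 0 ≤ W1 t)
    (hD : ∀ t, W1 t - W0 t = E t + L1 t - L0 t) (hL0 : Monotone L0)
    (k0 : ∀ s t ε : ℝ, 0 < ε → L0 s < L0 t → ∃ u, s ≤ u ∧ u ≤ t ∧ W0 u = 0 ∧ L0 t - ε ≤ L0 u) :
    Monotone fun t => B t - max (W0 t - W1 t) 0 := by
  intro s t hst
  have key : W0 t - W1 t ≤ B t - B s + max (W0 s - W1 s) 0 := by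
    rcases (hL0 hst).lt_or_eq with h | h
    · refine le_of_forall_pos_le_add fun ε hε => ?_
      obtain ⟨u, hsu, hut, hu, hLu⟩ := k0 s t ε hε h
      have h1 := hEB hut
      have h2 := hL1 hut
      have h3 := hB hsu
      have h4 := hD t
      have h5 := hD u
      have h6 := hW1 u
      have h7 := le_max_right (W0 s - W1 s) 0
      simp only at h1
      linarith
    · have h1 := hEB hst
      have h2 := hL1 hst
      have h4 := hD t
      have h5 := hD s
      have h7 := le_max_left (W0 s - W1 s) 0
      simp only at h1
      linarith
  have : max (W0 t - W1 t) 0 ≤ B t - B s + max (W0 s - W1 s) 0 :=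
    max_le key (by linarith [hB hst, le_max_right (W0 s - W1 s) 0])
  simp only
  linarith

/-- The one-dimensional comparison, second half. At a time `u` where `W1` vanishes, the function is
equal to `E u + B u`; after the last such time, `L1` is constant and the first half applies. -/
lemma diff_add_monotone
    (hL1 : Monotone L1) (hL0 : Monotone L0) (hB : Monotone B)
    (hEB : Monotone fun t => E t + B t)
    (hW1 : ∀ t, 0 ≤ W1 t) (hW0 : ∀ t, 0 ≤ W0 t)
    (hD : ∀ t, W1 t - W0 t = E t + L1 t - L0 t)
    (k1 : ∀ s t ε : ℝ, 0 < ε → L1 s < L1 t → ∃ u, s ≤ u ∧ u ≤ t ∧ W1 u = 0 ∧ L1 t - ε ≤ L1 u)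
    (k0 : ∀ s t ε : ℝ, 0 < ε → L0 s < L0 t → ∃ u, s ≤ u ∧ u ≤ t ∧ W0 u = 0 ∧ L0 t - ε ≤ L0 u) :
    Monotone fun t => L0 t - L1 t + (B t - max (W0 t - W1 t) 0) := by
  have first := negPart_le hL1 hB hEB hW1 hD hL0 k0
  intro s t hst
  simp only
  rcases (hL1 hst).lt_or_eq with h | h
  · refine le_of_forall_pos_le_add fun ε hε => ?_
    obtain ⟨u, hsu, hut, hu, hLu⟩ := k1 s t ε hε h
    have h1 := first hut
    have h2 := hL0 hut
    have h3 := hEB hsu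
    have h4 := hD u
    have h5 := hD s
    have h6 := le_max_left (W0 s - W1 s) 0
    have h7 : max (W0 u - W1 u) 0 = W0 u - W1 u := max_eq_left (by linarith [hW0 u])
    simp only at h1 h3
    linarith
  · have h1 := first hst
    have h2 := hL0 hst
    simp only at h1
    linarith

end Comparison

/-! ### Nonnegative matrices with powers tending to zero -/

/-- If `Qᵏ → 0`, the nonnegative vectors `m` with `m ≤ a + Q m` are bounded. -/
lemma exists_bound {n : ℕ} (Q : Matrix (Fin n) (Fin n) ℝ) (hQ : ∀ i j, 0 ≤ Q i j)
    (hpow : Tendsto (fun k : ℕ => Q ^ k) atTop (𝓝 0)) (a : Fin n → ℝ) :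
    ∃ C : ℝ, ∀ m : Fin n → ℝ, 0 ≤ m → m ≤ a + Q.mulVec m → ∀ i, m i ≤ C := by
  have mulVec_mono : ∀ x y : Fin n → ℝ, x ≤ y → Q.mulVec x ≤ Q.mulVec y := fun x y h i => by
    simp only [Matrix.mulVec, dotProduct]
    exact Finset.sum_le_sum fun j _ => mul_le_mul_of_nonneg_left (h j) (hQ i j)
  have iter : ∀ k : ℕ, ∃ b : Fin n → ℝ, ∀ m : Fin n → ℝ, m ≤ a + Q.mulVec m →
      m ≤ b + (Q ^ k).mulVec m := by
    intro k
    induction k with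
    | zero => exact ⟨0, fun m _ => by simp⟩
    | succ k ih =>
      obtain ⟨b, hb⟩ := ih
      refine ⟨a + Q.mulVec b, fun m hm => hm.trans ?_⟩
      have := mulVec_mono _ _ (hb m hm)
      rw [Matrix.mulVec_add, Matrix.mulVec_mulVec, ← pow_succ'] at this
      rw [add_assoc]
      exact add_le_add_right this a
  -- a power all of whose column sums are at most one half
  have hcol : ∀ᶠ k : ℕ in atTop, ∀ j, ∑ i, (Q ^ k) i j < 1 / 2 := by
    rw [eventually_all]
    intro j
    have h : Tendsto (fun k : ℕ => ∑ i, (Q ^ k) i j) atTop (𝓝 (∑ i : Fin n, (0 : ℝ))) :=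
      tendsto_finsetSum _ fun i _ => by
        have := (tendsto_pi_nhds.1 (tendsto_pi_nhds.1 hpow i)) j
        simpa using this
    rw [Finset.sum_const_zero] at h
    exact h.eventually (Iio_mem_nhds (by norm_num))
  obtain ⟨k, hk⟩ := hcol.exists
  obtain ⟨b, hb⟩ := iter k
  refine ⟨2 * ∑ i, b i, fun m hm0 hm i => ?_⟩
  have h1 : ∑ i, m i ≤ ∑ i, b i + ∑ i, (Q ^ k).mulVec m i := by
    rw [← Finset.sum_add_distrib]
    exact Finset.sum_le_sum fun i _ => hb m hm i
  have h2 : ∑ i, (Q ^ k).mulVec m i ≤ (1 / 2) * ∑ i, m i := by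
    simp only [Matrix.mulVec, dotProduct]
    rw [Finset.sum_comm, Finset.mul_sum]
    refine Finset.sum_le_sum fun j _ => ?_
    rw [← Finset.sum_mul]
    exact mul_le_mul_of_nonneg_right (hk j).le (hm0 j)
  have h3 : m i ≤ ∑ i, m i := Finset.single_le_sum (fun j _ => hm0 j) (Finset.mem_univ i)
  linarith

/-! ### Convergence of the difference -/

/-- The limit of Wᵃ(t) - W⁰(t) as t → ∞ exists in ℝⁿ and is coordinatewise nonnegative. -/
theorem skorohod_difference_limit_exists
    {n : ℕ} (hn : 0 < n) (P : Matrix (Fin n) (Fin n) ℝ)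
    (hPnonneg : ∀ i j, 0 ≤ P i j)
    (hPpow : Filter.Tendsto (fun k : ℕ => P ^ k) Filter.atTop (nhds 0))
    (X Wa La W0 L0 : ℝ → Fin n → ℝ)
    (hX : Cadlag X) (a : Fin n → ℝ) (ha : 0 ≤ a)
    (hA : IsSolutionPair (1 - P.transpose) (fun t => a + X t) Wa La)
    (h0 : IsSolutionPair (1 - P.transpose) X W0 L0) :
    ∃ ζ : Fin n → ℝ, 0 ≤ ζ ∧
      Filter.Tendsto (fun t => Wa t - W0 t) Filter.atTop (nhds ζ) := by
  classical
  set Q := P.transpose with hQdef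
  have hQ : ∀ i j, 0 ≤ Q i j := fun i j => hPnonneg j i
  have hQpow : Tendsto (fun k : ℕ => Q ^ k) atTop (𝓝 0) := by
    have h : Continuous fun A : Matrix (Fin n) (Fin n) ℝ => A.transpose :=
      continuous_id.matrix_transpose
    have := (h.tendsto 0).comp hPpow
    simpa [Function.comp_def, hQdef, Matrix.transpose_pow] using this
  -- the extensions by zero to negative times
  let l1 : Fin n → ℝ → ℝ := fun i => extZero fun t => La t i
  let l0 : Fin n → ℝ → ℝ := fun i => extZero fun t => L0 t i
  let w1 : Fin n → ℝ → ℝ := fun i => extZero fun t => Wa t i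
  let w0 : Fin n → ℝ → ℝ := fun i => extZero fun t => W0 t i
  let α : Fin n → ℝ → ℝ := fun i => extZero fun _ => a i
  let M : ℝ → Fin n → ℝ := fun t i => l0 i t - l1 i t
  have hl1 : ∀ i, Monotone (l1 i) := fun i => extZero_monotone (hA.nonnegL i) (hA.monoL i)
  have hl0 : ∀ i, Monotone (l0 i) := fun i => extZero_monotone (h0.nonnegL i) (h0.monoL i)
  have hα : ∀ i, Monotone (α i) := fun i =>
    extZero_monotone (fun _ _ => ha i) (fun _ _ _ _ _ => le_rfl)
  have k1 := fun i => exists_zero_of_flat (hA.nonnegL i) (hA.monoL i) (hA.rcL i) (hA.nonnegW i)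
    (hA.flat i)
  have k0 := fun i => exists_zero_of_flat (h0.nonnegL i) (h0.monoL i) (h0.rcL i) (h0.nonnegW i)
    (h0.flat i)
  have hw1 : ∀ i t, 0 ≤ w1 i t := fun i t => by
    change 0 ≤ if t < 0 then 0 else Wa t i
    split_ifs with h
    · exact le_rfl
    · exact hA.nonnegW i t (not_lt.1 h)
  have hw0 : ∀ i t, 0 ≤ w0 i t := fun i t => by
    change 0 ≤ if t < 0 then 0 else W0 t i
    split_ifs with h
    · exact le_rfl
    · exact h0.nonnegW i t (not_lt.1 h)
  have hD : ∀ i t, w1 i t - w0 i t = (α i t + Q.mulVec (M t) i) + l1 i t - l0 i t := by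
    intro i t
    by_cases h : t < 0
    · have hM : M t = 0 := by
        funext j
        simp [M, l0, l1, extZero, h]
      rw [hM]
      simp [w1, w0, α, l0, l1, extZero, h]
    · have hM : M t = L0 t - La t := by
        funext j
        simp [M, l0, l1, extZero, h]
      rw [hM, Matrix.mulVec_sub]
      have e1 := congrFun (hA.eqn t (not_lt.1 h)) i
      have e0 := congrFun (h0.eqn t (not_lt.1 h)) i
      simp only [Pi.add_apply, Matrix.sub_mulVec, Matrix.one_mulVec, Pi.sub_apply] at e1 e0
      simp only [w1, w0, α, l0, l1, extZero, h, if_false, Pi.sub_apply]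
      rw [e1, e0]
      ring
  have mulVec_mono : ∀ x y : Fin n → ℝ, x ≤ y → Q.mulVec x ≤ Q.mulVec y := fun x y h i => by
    simp only [Matrix.mulVec, dotProduct]
    exact Finset.sum_le_sum fun j _ => mul_le_mul_of_nonneg_left (h j) (hQ i j)
  -- the improvement of the error bound, together with what it says about the negative part of `D`
  have step : ∀ B : ℝ → Fin n → ℝ, Monotone B → (∀ t, t < 0 → B t = 0) →
      Monotone (fun t => M t + B t) → ∃ B' : ℝ → Fin n → ℝ, Monotone B' ∧
        (∀ t, t < 0 → B' t = 0) ∧ Monotone (fun t => M t + B' t) ∧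
        (∀ t, B' t ≤ Q.mulVec (B t)) ∧ ∀ t i, w0 i t - w1 i t ≤ Q.mulVec (B t) i := by
    intro B hB hBneg hMB
    have hB1 : ∀ i, Monotone fun t => Q.mulVec (B t) i := fun i s t hst =>
      mulVec_mono _ _ (hB hst) i
    have hB2 : ∀ i, Monotone fun t => (α i t + Q.mulVec (M t) i) + Q.mulVec (B t) i := by
      intro i s t hst
      have e := mulVec_mono _ _ (hMB hst) i
      simp only [Matrix.mulVec_add, Pi.add_apply] at e
      have := hα i hst
      simp only
      linarith
    have m1 := fun i => negPart_le (hl1 i) (hB1 i) (hB2 i) (hw1 i) (hD i) (hl0 i) (k0 i)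
    have m2 := fun i => diff_add_monotone (hl1 i) (hl0 i) (hB1 i) (hB2 i) (hw1 i) (hw0 i) (hD i)
      (k1 i) (k0 i)
    have hneg : ∀ t, t < 0 → ∀ i, Q.mulVec (B t) i - max (w0 i t - w1 i t) 0 = 0 := by
      intro t ht i
      rw [hBneg t ht]
      simp [w0, w1, extZero, ht]
    refine ⟨fun t i => Q.mulVec (B t) i - max (w0 i t - w1 i t) 0, fun s t hst i => m1 i hst,
      fun t ht => funext fun i => hneg t ht i, fun s t hst i => m2 i hst, fun t i => ?_,
      fun t i => ?_⟩
    · have := le_max_right (w0 i t - w1 i t) 0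
      simp only
      linarith
    · have e1 := m1 i (show min t (-1) ≤ t from min_le_left _ _)
      have e2 := hneg (min t (-1)) (lt_of_le_of_lt (min_le_right _ _) (by norm_num)) i
      have e3 := le_max_left (w0 i t - w1 i t) 0
      simp only at e1
      linarith
  have iter : ∀ k : ℕ, ∃ B : ℝ → Fin n → ℝ, Monotone B ∧ (∀ t, t < 0 → B t = 0) ∧
      Monotone (fun t => M t + B t) ∧ ∀ t, B t ≤ (Q ^ k).mulVec fun i => l1 i t := by
    intro k
    induction k with
    | zero =>
      refine ⟨fun t i => l1 i t, fun s t hst i => hl1 i hst,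
        fun t ht => funext fun i => if_pos ht, fun s t hst i => ?_, fun t => by simp⟩
      have := hl0 i hst
      simp only [M, Pi.add_apply]
      linarith
    | succ k ih =>
      obtain ⟨B, b1, b2, b3, b4⟩ := ih
      obtain ⟨B', c1, c2, c3, c4, -⟩ := step B b1 b2 b3
      refine ⟨B', c1, c2, c3, fun t => (c4 t).trans ?_⟩
      rw [pow_succ', ← Matrix.mulVec_mulVec]
      exact mulVec_mono _ _ (b4 t)
  have hlim : ∀ t i, Tendsto (fun k : ℕ => (Q ^ k).mulVec (fun i => l1 i t) i) atTop (𝓝 0) := by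
    intro t i
    have h : Continuous fun A : Matrix (Fin n) (Fin n) ℝ => A.mulVec (fun i => l1 i t) i :=
      (continuous_apply i).comp (continuous_id.matrix_mulVec continuous_const)
    have := (h.tendsto 0).comp hQpow
    simpa [Function.comp_def] using this
  have hle : ∀ i t, w0 i t ≤ w1 i t := by
    intro i t
    have h := (hlim t i).comp (tendsto_add_atTop_nat 1)
    have : w0 i t - w1 i t ≤ 0 := ge_of_tendsto' h fun k => by
      obtain ⟨B, b1, b2, b3, b4⟩ := iter k
      obtain ⟨B', -, -, -, -, c5⟩ := step B b1 b2 b3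
      refine (c5 t i).trans ?_
      simp only [Function.comp]
      rw [pow_succ', ← Matrix.mulVec_mulVec]
      exact mulVec_mono _ _ (b4 t) i
    linarith
  have hM : ∀ i, Monotone fun t => M t i := by
    intro i s t hst
    have : M s i - M t i ≤ 0 := ge_of_tendsto' (hlim t i) fun k => by
      obtain ⟨B, b1, b2, b3, b4⟩ := iter k
      have e1 := b3 hst i
      have e2 := b4 t i
      have e3 := b1 (show min s (-1) ≤ s from min_le_left _ _) i
      rw [b2 (min s (-1)) (lt_of_le_of_lt (min_le_right _ _) (by norm_num))] at e3
      simp only [Pi.add_apply, Pi.zero_apply] at e1 e3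
      linarith
    simp only
    linarith
  have hMneg : ∀ t, t < 0 → M t = 0 := fun t ht => by
    funext j
    simp [M, l0, l1, extZero, ht]
  have hM0 : ∀ t, 0 ≤ M t := fun t i => by
    have e := hM i (show min t (-1) ≤ t from min_le_left _ _)
    simp only at e
    rwa [hMneg (min t (-1)) (lt_of_le_of_lt (min_le_right _ _) (by norm_num))] at e
  have hαa : ∀ i t, α i t ≤ a i := fun i t => by
    change (if t < 0 then 0 else a i) ≤ a i
    split_ifs
    · exact ha i
    · exact le_rfl
  obtain ⟨C, hC⟩ := exists_bound Q hQ hQpow a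
  have hMC : ∀ i t, M t i ≤ C := fun i t => hC (M t) (hM0 t) (fun j => by
    have e1 := hD j t
    have e2 := hle j t
    have e3 := hαa j t
    simp only [Pi.add_apply]
    change l0 j t - l1 j t ≤ _
    linarith) i
  have hconv : Tendsto M atTop (𝓝 fun i => ⨆ t, M t i) := tendsto_pi_nhds.2 fun i =>
    tendsto_atTop_ciSup (hM i) ⟨C, by rintro _ ⟨t, rfl⟩; exact hMC i t⟩
  set m : Fin n → ℝ := fun i => ⨆ t, M t i with hm
  have hcont : Continuous fun x : Fin n → ℝ => a + Q.mulVec x - x :=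
    (continuous_const.add (continuous_const.matrix_mulVec continuous_id)).sub continuous_id
  have hDlim : Tendsto (fun t => Wa t - W0 t) atTop (𝓝 (a + Q.mulVec m - m)) := by
    refine ((hcont.tendsto m).comp hconv).congr' ?_
    filter_upwards [eventually_ge_atTop (0 : ℝ)] with t ht
    funext i
    have e := hD i t
    simp only [w1, w0, α, extZero, if_neg (not_lt.2 ht)] at e
    simp only [Function.comp, Pi.sub_apply, Pi.add_apply]
    change _ - (l0 i t - l1 i t) = _
    linarith
  refine ⟨_, ge_of_tendsto hDlim ?_, hDlim⟩
  filter_upwards [eventually_ge_atTop (0 : ℝ)] with t ht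
  intro i
  have e := hle i t
  simp only [w1, w0, extZero, if_neg (not_lt.2 ht)] at e
  simp only [Pi.sub_apply, Pi.zero_apply]
  linarith
end

section
/- Let X be a càdlàg function from [0,∞) to ℝⁿ and fix i ∈ {1,…,n}. Suppose that for every a ∈ [0,∞)ⁿ and every solution pair (Wᵃ, Lᵃ) of the Skorohod problem for a + X one has lim_{t→∞} Lᵃ_i(t) = ∞. Then for every a ∈ [0,∞)ⁿ, every solution pair (Wᵃ, Lᵃ) of the Skorohod problem for a + X and every solution pair (W⁰, L⁰) of the Skorohod problem for X, lim_{t→∞} (Wᵃ_i(t) − W⁰_i(t)) = 0. -/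
/-! Extend the pushing processes `L⁰`, `Lᵃ` of the two solutions by `0` to negative times and let
`D = L⁰ - Lᵃ`. Two facts drive the proof.

* `D` is nondecreasing. Complementarity says that `L_i` is the smallest nondecreasing nonnegative
  process keeping the `i`-th coordinate nonnegative (`IsSolutionPair.le_of_forall`), and the drivers
  `Lᵃ - Wᵃ` and `L⁰ - W⁰` of the two one-dimensional problems differ by `a + Pᵗ D`. Hence if
  `D s - D t ≤ e` for all `s ≤ t ≤ T`, then also `D s - D t ≤ Pᵗ e` (`defect_step`); iterating,
  `D s - D t ≤ (Pᵗ)ᵏ e → 0`.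
* `D` is bounded above by the solution `q` of `q = a + Pᵗ q`: a bound `D ≤ q + e` on `[0, T]`
  improves to `D ≤ q + Pᵗ e`, and the iteration is the same (`bound_step`).

So `D` converges, and with it `Wᵃ - W⁰ = a - (I - Pᵗ) D`. If the `i`-th limit were positive, `Wᵃ_i`
would eventually be positive and `Lᵃ_i` eventually constant, contradicting its divergence; if it
were negative, the same would happen to `W⁰_i` and `L⁰_i`, which diverges by the hypothesis at
`a = 0`. -/

open MeasureTheory Filter Topology

/-! ### Minimality of the one-dimensional pushing process -/

lemma extZero_of_neg {f : ℝ → ℝ} {t : ℝ} (h : t < 0) : extZero f t = 0 := by simp [extZero, h]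

lemma extZero_of_nonneg {f : ℝ → ℝ} {t : ℝ} (h : 0 ≤ t) : extZero f t = f t := by
  simp [extZero, not_lt.mpr h]

section OneCoordinate

variable {n : ℕ} {R : Matrix (Fin n) (Fin n) ℝ} {X W L : ℝ → Fin n → ℝ}

lemma IsSolutionPair.ext_nonneg (h : IsSolutionPair R X W L) (i : Fin n) (t : ℝ) :
    0 ≤ extZero (fun t => L t i) t := by
  rcases lt_or_ge t 0 with ht | ht
  · rw [extZero_of_neg ht]
  · rw [extZero_of_nonneg ht]; exact h.nonnegL i t ht

lemma IsSolutionPair.ext_mono (h : IsSolutionPair R X W L) (i : Fin n) :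
    Monotone (extZero fun t => L t i) := by
  intro s t hst
  rcases lt_or_ge s 0 with hs | hs
  · rw [extZero_of_neg hs]; exact h.ext_nonneg i t
  · rw [extZero_of_nonneg hs, extZero_of_nonneg (hs.trans hst)]
    exact h.monoL i hs (hs.trans hst) hst

lemma IsSolutionPair.ext_rc (h : IsSolutionPair R X W L) (i : Fin n) (x : ℝ) :
    ContinuousWithinAt (extZero fun t => L t i) (Set.Ici x) x := by
  rcases lt_or_ge x 0 with hx | hx
  · have : (extZero fun t => L t i) =ᶠ[𝓝 x] fun _ => 0 := by
      filter_upwards [Iio_mem_nhds hx] with t ht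
      exact extZero_of_neg ht
    exact (continuousAt_const.congr this.symm).continuousWithinAt
  · refine (h.rcL i x hx).congr (fun y hy => ?_) (extZero_of_nonneg hx)
    exact extZero_of_nonneg (hx.trans hy)

/-- The extended pushing process as a Stieltjes function. -/
noncomputable def IsSolutionPair.stieltjes (h : IsSolutionPair R X W L) (i : Fin n) :
    StieltjesFunction ℝ :=
  ⟨extZero fun t => L t i, h.ext_mono i, h.ext_rc i⟩

lemma IsSolutionPair.measure_eq_zero (h : IsSolutionPair R X W L) (i : Fin n) {A : Set ℝ}
    (hA : ∀ u ∈ A, 0 ≤ u ∧ 0 < W u i) : (h.stieltjes i).measure A = 0 := by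
  have h1 := h.flat i
  rw [lsMeasure, dif_pos ⟨h.ext_mono i, h.ext_rc i⟩] at h1
  exact measure_mono_null hA h1

/-- The pushing process does not increase while the reflected coordinate is positive. -/
lemma IsSolutionPair.le_of_pos (h : IsSolutionPair R X W L) (i : Fin n) {s t : ℝ}
    (hA : ∀ u, s < u → u ≤ t → 0 ≤ u ∧ 0 < W u i) :
    extZero (fun t => L t i) t ≤ extZero (fun t => L t i) s := by
  have h1 := h.measure_eq_zero i (A := Set.Ioc s t) (fun u hu => hA u hu.1 hu.2)
  rw [StieltjesFunction.measure_Ioc, ENNReal.ofReal_eq_zero] at h1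
  exact sub_nonpos.mp h1

/-- Minimality of the pushing process: `L_i` grows past the level `c` on `(s, t]` only if the
driver `L_i - W_i` does. -/
lemma IsSolutionPair.le_of_forall (h : IsSolutionPair R X W L) (i : Fin n) {s t c : ℝ}
    (hst : s ≤ t) (hs : extZero (fun t => L t i) s ≤ c)
    (hu : ∀ u, s < u → u ≤ t → 0 ≤ u → L u i - W u i ≤ c) :
    extZero (fun t => L t i) t ≤ c := by
  set F := extZero (fun t => L t i) with hF
  by_contra! hc
  have key : ∀ u, s < u → u ≤ t → c < F u → 0 ≤ u ∧ 0 < W u i := by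
    intro u h1 h2 h3
    have h0 : 0 ≤ u := by
      by_contra! hneg
      have := h.ext_nonneg i s
      rw [hF, extZero_of_neg hneg] at h3
      linarith
    have := hu u h1 h2 h0
    rw [hF, extZero_of_nonneg h0] at h3
    exact ⟨h0, by linarith⟩
  -- `σ` is the first passage time above the level `c`; it may or may not be attained.
  set A : Set ℝ := {u | s ≤ u ∧ c < F u} with hA
  have hbdd : BddBelow A := ⟨s, fun u hu => hu.1⟩
  have hne : A.Nonempty := ⟨t, hst, hc⟩
  set σ := sInf A with hσ
  have hsσ : s ≤ σ := le_csInf hne fun u hu => hu.1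
  have hσt : σ ≤ t := csInf_le hbdd ⟨hst, hc⟩
  have hmono : Monotone F := h.ext_mono i
  have habove : ∀ u, σ < u → c < F u := by
    intro u hu
    obtain ⟨v, hv, hvu⟩ := exists_lt_of_csInf_lt hne hu
    exact hv.2.trans_le (hmono hvu.le)
  rcases lt_or_ge c (F σ) with hcσ | hcσ
  · have hsσ' : s < σ := by
      rcases hsσ.lt_or_eq with h1 | h1
      · exact h1
      · rw [← h1] at hcσ; linarith
    have h1 := h.measure_eq_zero i (A := Set.Icc σ t) (fun u hu =>
      key u (hsσ'.trans_le hu.1) hu.2 (hcσ.trans_le (hmono hu.1)))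
    rw [StieltjesFunction.measure_Icc, ENNReal.ofReal_eq_zero] at h1
    have h2 : Function.leftLim F σ ≤ c := by
      refine le_of_tendsto (hmono.tendsto_leftLim σ) ?_
      filter_upwards [Ioo_mem_nhdsLT hsσ'] with v hv
      by_contra! hcv
      exact absurd (csInf_le hbdd ⟨hv.1.le, hcv⟩) (not_le.mpr hv.2)
    have h3 : F t - Function.leftLim F σ ≤ 0 := h1
    linarith
  · have h1 : F t ≤ F σ := h.le_of_pos i fun u h1 h2 =>
      key u (hsσ.trans_lt h1) h2 (habove u h1)
    linarith

end OneCoordinate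

/-! ### Comparison of two initial conditions -/

section Comparison

variable {n : ℕ} {P : Matrix (Fin n) (Fin n) ℝ} {X Wa La W0 L0 : ℝ → Fin n → ℝ} {a : Fin n → ℝ}

lemma mulVec_mono (hP : ∀ i j, 0 ≤ P i j) {u v : Fin n → ℝ} (h : u ≤ v) :
    P.transpose.mulVec u ≤ P.transpose.mulVec v := by
  intro i
  simp only [Matrix.mulVec, dotProduct, Matrix.transpose_apply]
  exact Finset.sum_le_sum fun j _ => mul_le_mul_of_nonneg_left (h j) (hP j i)

/-- The difference `L⁰ - Lᵃ` of the pushing processes, extended by `0` to negative times. -/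
noncomputable def pushDiff (La L0 : ℝ → Fin n → ℝ) (t : ℝ) : Fin n → ℝ :=
  fun j => extZero (fun t => L0 t j) t - extZero (fun t => La t j) t

lemma pushDiff_of_nonneg {t : ℝ} (ht : 0 ≤ t) : pushDiff La L0 t = L0 t - La t := by
  ext j; simp [pushDiff, extZero_of_nonneg ht]

lemma pushDiff_of_neg {t : ℝ} (ht : t < 0) : pushDiff La L0 t = 0 := by
  ext j; simp [pushDiff, extZero_of_neg ht]

lemma sub_eq_of_solutions (ha : IsSolutionPair (1 - P.transpose) (fun t => a + X t) Wa La)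
    (h0 : IsSolutionPair (1 - P.transpose) X W0 L0) {t : ℝ} (ht : 0 ≤ t) :
    Wa t - W0 t = a - (1 - P.transpose).mulVec (pushDiff La L0 t) := by
  rw [ha.eqn t ht, h0.eqn t ht, pushDiff_of_nonneg ht, Matrix.mulVec_sub]
  abel

/-- The drivers of the two one-dimensional problems differ by `a + Pᵗ (L⁰ - Lᵃ)`. -/
lemma driver_eq (ha : IsSolutionPair (1 - P.transpose) (fun t => a + X t) Wa La)
    (h0 : IsSolutionPair (1 - P.transpose) X W0 L0) {t : ℝ} (ht : 0 ≤ t) (i : Fin n) :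
    L0 t i - W0 t i =
      La t i - Wa t i + (a i + P.transpose.mulVec (pushDiff La L0 t) i) := by
  have h1 := congrFun (sub_eq_of_solutions ha h0 ht) i
  rw [Matrix.sub_mulVec, Matrix.one_mulVec] at h1
  simp only [Pi.sub_apply] at h1
  have h2 := congrFun (pushDiff_of_nonneg (La := La) (L0 := L0) ht) i
  simp only [Pi.sub_apply] at h2
  linarith

lemma driver_le {R : Matrix (Fin n) (Fin n) ℝ} {X W L : ℝ → Fin n → ℝ}
    (h : IsSolutionPair R X W L) {s t : ℝ} (hs : 0 ≤ s) (hst : s ≤ t) (i : Fin n) :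
    L s i - W s i ≤ extZero (fun t => L t i) t := by
  have h1 := h.ext_mono i hst
  have h2 := h.nonnegW i s hs
  rw [extZero_of_nonneg hs] at h1
  linarith

/-- Propagation of the monotonicity defect of `L⁰ - Lᵃ` through one application of `Pᵗ`. -/
lemma defect_step (hP : ∀ i j, 0 ≤ P i j) (hpos : 0 ≤ a)
    (ha : IsSolutionPair (1 - P.transpose) (fun t => a + X t) Wa La)
    (h0 : IsSolutionPair (1 - P.transpose) X W0 L0) {T : ℝ} {e : Fin n → ℝ} (he : 0 ≤ e)
    (hD : ∀ s t, s ≤ t → t ≤ T → pushDiff La L0 s - pushDiff La L0 t ≤ e) :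
    ∀ s t, s ≤ t → t ≤ T → pushDiff La L0 s - pushDiff La L0 t ≤ P.transpose.mulVec e := by
  intro s t hst htT i
  have hg : 0 ≤ P.transpose.mulVec e i := by
    have := mulVec_mono hP he i
    simpa using this
  -- the defect of the perturbation `h = a + Pᵗ (L⁰ - Lᵃ)`
  have hh : ∀ v u, v ≤ u → u ≤ T → P.transpose.mulVec (pushDiff La L0 v) i ≤
      P.transpose.mulVec (pushDiff La L0 u) i + P.transpose.mulVec e i := by
    intro v u hvu huT
    have := mulVec_mono hP (hD v u hvu huT) i
    rw [Matrix.mulVec_sub] at this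
    simp only [Pi.sub_apply] at this
    linarith
  have hh0 : ∀ u, 0 ≤ u → u ≤ T →
      0 ≤ a i + P.transpose.mulVec (pushDiff La L0 u) i + P.transpose.mulVec e i := by
    intro u hu huT
    have := hh (-1) u (by linarith) huT
    rw [pushDiff_of_neg (by norm_num : (-1 : ℝ) < 0), Matrix.mulVec_zero] at this
    have h2 := hpos i
    simp only [Pi.zero_apply] at this h2
    linarith
  have main : extZero (fun t => La t i) t ≤ extZero (fun t => La t i) s +
      (extZero (fun t => L0 t i) t - extZero (fun t => L0 t i) s) + P.transpose.mulVec e i := by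
    refine ha.le_of_forall i hst ?_ ?_
    · have := h0.ext_mono i hst
      linarith
    · intro u hsu hut hu0
      have huT := hut.trans htT
      have h1 := driver_eq ha h0 hu0 i
      have h2 := driver_le h0 hu0 hut i
      have h3 : extZero (fun t => L0 t i) s ≤ extZero (fun t => La t i) s +
          (a i + P.transpose.mulVec (pushDiff La L0 u) i + P.transpose.mulVec e i) := by
        have h4 := hh0 u hu0 huT
        have h5 := ha.ext_nonneg i s
        rcases lt_or_ge s 0 with hs | hs
        · rw [extZero_of_neg hs]; linarith
        · refine h0.le_of_forall i (s := -1) (by linarith) ?_ ?_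
          · rw [extZero_of_neg (by norm_num)]; linarith
          · intro v _ hvs hv0
            have h6 := driver_eq ha h0 hv0 i
            have h7 := driver_le ha hv0 hvs i
            have h8 := hh v u (hvs.trans hsu.le) huT
            linarith
      linarith
  simp only [pushDiff, Pi.sub_apply]
  linarith

lemma tendsto_pow_mulVec (hPpow : Tendsto (fun k : ℕ => P ^ k) atTop (𝓝 0)) (v : Fin n → ℝ) :
    Tendsto (fun k : ℕ => (P.transpose ^ k).mulVec v) atTop (𝓝 0) := by
  have hc : Continuous fun M : Matrix (Fin n) (Fin n) ℝ => M.transpose.mulVec v :=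
    (continuous_id.matrix_transpose).matrix_mulVec continuous_const
  have := (hc.tendsto 0).comp hPpow
  simpa [Function.comp_def, Matrix.transpose_pow] using this

lemma pushDiff_mono (hP : ∀ i j, 0 ≤ P i j)
    (hPpow : Tendsto (fun k : ℕ => P ^ k) atTop (𝓝 0)) (hpos : 0 ≤ a)
    (ha : IsSolutionPair (1 - P.transpose) (fun t => a + X t) Wa La)
    (h0 : IsSolutionPair (1 - P.transpose) X W0 L0) : Monotone (pushDiff La L0) := by
  intro s T hsT
  set e : Fin n → ℝ := fun j => extZero (fun t => L0 t j) T + extZero (fun t => La t j) T with he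
  have key : ∀ k : ℕ, 0 ≤ (P.transpose ^ k).mulVec e ∧ ∀ s t, s ≤ t → t ≤ T →
      pushDiff La L0 s - pushDiff La L0 t ≤ (P.transpose ^ k).mulVec e := by
    intro k
    induction k with
    | zero =>
      rw [pow_zero, Matrix.one_mulVec]
      refine ⟨fun j => add_nonneg (h0.ext_nonneg j T) (ha.ext_nonneg j T), ?_⟩
      intro s t hst htT j
      have h1 := h0.ext_mono j (hst.trans htT)
      have h2 := ha.ext_mono j htT
      have h3 := ha.ext_nonneg j s
      have h4 := h0.ext_nonneg j t
      simp only [pushDiff, Pi.sub_apply, he]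
      linarith
    | succ k ih =>
      rw [pow_succ', ← Matrix.mulVec_mulVec]
      refine ⟨?_, defect_step hP hpos ha h0 ih.1 ih.2⟩
      have := mulVec_mono hP ih.1
      rwa [Matrix.mulVec_zero] at this
  have := ge_of_tendsto' (tendsto_pow_mulVec hPpow e) fun k => (key k).2 s T hsT le_rfl
  exact sub_nonpos.mp this

/-- An upper bound `b` on `L⁰ - Lᵃ` at time `T` improves to `a + Pᵗ b`. Monotonicity of `L⁰ - Lᵃ`
turns the bound at `T` into one on all of `[0, T]`. -/
lemma bound_step (hP : ∀ i j, 0 ≤ P i j)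
    (ha : IsSolutionPair (1 - P.transpose) (fun t => a + X t) Wa La)
    (h0 : IsSolutionPair (1 - P.transpose) X W0 L0) (hmono : Monotone (pushDiff La L0))
    (hpos : 0 ≤ a) {T : ℝ} (hT : 0 ≤ T) {b : Fin n → ℝ} (hb : pushDiff La L0 T ≤ b) :
    pushDiff La L0 T ≤ a + P.transpose.mulVec b := by
  intro i
  have hD0 : 0 ≤ pushDiff La L0 T := by
    have := hmono (show (-1 : ℝ) ≤ T by linarith)
    rwa [pushDiff_of_neg (by norm_num : (-1 : ℝ) < 0)] at this
  have hb0 := mulVec_mono hP (hD0.trans hb) i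
  have hai := hpos i
  simp only [Matrix.mulVec_zero, Pi.zero_apply] at hb0 hai
  have main : extZero (fun t => L0 t i) T ≤
      extZero (fun t => La t i) T + (a i + P.transpose.mulVec b i) := by
    refine h0.le_of_forall i (s := -1) (by linarith) ?_ ?_
    · rw [extZero_of_neg (by norm_num)]
      have := ha.ext_nonneg i T
      linarith
    · intro v _ hvT hv0
      have h6 := driver_eq ha h0 hv0 i
      have h7 := driver_le ha hv0 hvT i
      have h8 := mulVec_mono hP ((hmono hvT).trans hb) i
      linarith
  simp only [pushDiff, Pi.add_apply]
  linarith

/-- The equation `q = a + Pᵗ q` is solvable because `1` is not an eigenvalue of `Pᵗ`. -/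
lemma exists_fixed (hPpow : Tendsto (fun k : ℕ => P ^ k) atTop (𝓝 0)) (a : Fin n → ℝ) :
    ∃ q, q = a + P.transpose.mulVec q := by
  have hinj : Function.Injective (Matrix.mulVecLin (1 - P.transpose)) := by
    rw [injective_iff_map_eq_zero]
    intro v hv
    rw [Matrix.mulVecLin_apply, Matrix.sub_mulVec, Matrix.one_mulVec, sub_eq_zero] at hv
    have hk : ∀ k : ℕ, (P.transpose ^ k).mulVec v = v := by
      intro k
      induction k with
      | zero => simp
      | succ k ih => rw [pow_succ', ← Matrix.mulVec_mulVec, ih, ← hv]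
    have := tendsto_pow_mulVec hPpow v
    simp only [hk] at this
    exact tendsto_nhds_unique tendsto_const_nhds this
  obtain ⟨q, hq⟩ := LinearMap.injective_iff_surjective.mp hinj a
  rw [Matrix.mulVecLin_apply, Matrix.sub_mulVec, Matrix.one_mulVec] at hq
  exact ⟨q, by rw [← hq]; simp⟩

lemma pushDiff_bounded (hP : ∀ i j, 0 ≤ P i j)
    (hPpow : Tendsto (fun k : ℕ => P ^ k) atTop (𝓝 0)) (hpos : 0 ≤ a)
    (ha : IsSolutionPair (1 - P.transpose) (fun t => a + X t) Wa La)
    (h0 : IsSolutionPair (1 - P.transpose) X W0 L0) :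
    ∃ q, ∀ t, pushDiff La L0 t ≤ q := by
  have hmono := pushDiff_mono hP hPpow hpos ha h0
  obtain ⟨q, hq⟩ := exists_fixed hPpow a
  refine ⟨q, fun t => (hmono (le_max_left t 0)).trans ?_⟩
  have hT : 0 ≤ max t 0 := le_max_right t 0
  set T := max t 0
  have key : ∀ k : ℕ,
      pushDiff La L0 T ≤ q + (P.transpose ^ k).mulVec (pushDiff La L0 T - q) := by
    intro k
    induction k with
    | zero => simp
    | succ k ih =>
      have := bound_step hP ha h0 hmono hpos hT ih
      rwa [Matrix.mulVec_add, ← add_assoc, ← hq, Matrix.mulVec_mulVec, ← pow_succ'] at this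
  have := ge_of_tendsto' ((tendsto_pow_mulVec hPpow (pushDiff La L0 T - q)).const_add q) key
  simpa using this

lemma not_eventually_pos {R : Matrix (Fin n) (Fin n) ℝ} {X W L : ℝ → Fin n → ℝ}
    (h : IsSolutionPair R X W L) (i : Fin n) (hdiv : Tendsto (fun t => L t i) atTop atTop) :
    ¬ ∀ᶠ t in atTop, 0 < W t i := by
  intro hW
  obtain ⟨s, hs⟩ := eventually_atTop.mp (hW.and (eventually_ge_atTop 0))
  obtain ⟨t, ht1, ht2⟩ := ((hdiv.eventually_gt_atTop (L s i)).and (eventually_ge_atTop s)).exists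
  have h1 := h.le_of_pos i (s := s) (t := t) fun u hu _ => ⟨(hs u hu.le).2, (hs u hu.le).1⟩
  rw [extZero_of_nonneg (hs t ht2).2, extZero_of_nonneg (hs s le_rfl).2] at h1
  linarith

end Comparison

/-! ### Convergence of the difference -/

/-- If L_i diverges for every nonnegative initial shift, then W_i(a+X) - W_i(X) → 0
for every a ≥ 0. -/
theorem skorohod_divergence_implies_insensitivity
    {n : ℕ} (hn : 0 < n) (P : Matrix (Fin n) (Fin n) ℝ)
    (hPnonneg : ∀ i j, 0 ≤ P i j)
    (hPpow : Filter.Tendsto (fun k : ℕ => P ^ k) Filter.atTop (nhds 0))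
    (X : ℝ → Fin n → ℝ) (hX : Cadlag X) (i : Fin n)
    (hdiv : ∀ (a : Fin n → ℝ) (Wa La : ℝ → Fin n → ℝ), 0 ≤ a →
      IsSolutionPair (1 - P.transpose) (fun t => a + X t) Wa La →
      Filter.Tendsto (fun t => La t i) Filter.atTop Filter.atTop) :
    ∀ (a : Fin n → ℝ) (Wa La W0 L0 : ℝ → Fin n → ℝ), 0 ≤ a →
      IsSolutionPair (1 - P.transpose) (fun t => a + X t) Wa La →
      IsSolutionPair (1 - P.transpose) X W0 L0 →
      Filter.Tendsto (fun t => Wa t i - W0 t i) Filter.atTop (nhds 0) := by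
  intro a Wa La W0 L0 hpos ha h0
  have hmono := pushDiff_mono hPnonneg hPpow hpos ha h0
  obtain ⟨q, hq⟩ := pushDiff_bounded hPnonneg hPpow hpos ha h0
  have hlim : Tendsto (pushDiff La L0) atTop (𝓝 (⨆ t, pushDiff La L0 t)) :=
    tendsto_atTop_ciSup hmono ⟨q, by rintro _ ⟨t, rfl⟩; exact hq t⟩
  obtain ⟨l, hl⟩ : ∃ l, Tendsto (fun t => Wa t i - W0 t i) atTop (𝓝 l) := by
    have hc : Continuous fun v : Fin n → ℝ => (a - (1 - P.transpose).mulVec v) i :=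
      (continuous_apply i).comp
        (continuous_const.sub (Continuous.matrix_mulVec continuous_const continuous_id))
    refine ⟨_, ((hc.tendsto _).comp hlim).congr' ?_⟩
    filter_upwards [eventually_ge_atTop 0] with t ht
    exact (congrFun (sub_eq_of_solutions ha h0 ht) i).symm
  rcases lt_trichotomy l 0 with hneg | rfl | hpos'
  · have h0' : IsSolutionPair (1 - P.transpose) (fun t => 0 + X t) W0 L0 := by simpa using h0
    refine absurd ?_ (not_eventually_pos h0 i (hdiv 0 W0 L0 le_rfl h0'))
    filter_upwards [hl.eventually_lt_const hneg, eventually_ge_atTop 0] with t ht ht0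
    have := ha.nonnegW i t ht0
    linarith
  · exact hl
  · refine absurd ?_ (not_eventually_pos ha i (hdiv a Wa La hpos ha))
    filter_upwards [hl.eventually_const_lt hpos', eventually_ge_atTop 0] with t ht ht0
    have := h0.nonnegW i t ht0
    linarith
end

section
/- Let X be a càdlàg function from [0,∞) to ℝⁿ and let (W, L) be a solution pair of the Skorohod problem for X. Then for every i ∈ {1,…,n} and every t ≥ 0, max( M_i(X)(t), N_i(X)(t) ) ≤ L_i(t) ≤ (R⁻¹ M(X)(t))_i. -/
/-!
Put `Q = Pᵀ`, so that `R = 1 - Q`.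

*Inverse.* Since `Q ^ k → 0`, a vector fixed by `Q` vanishes, so `R` is invertible; letting
`k → ∞` in `∑_{j<k} Q ^ j = (1 - Q ^ k) R⁻¹` shows that `R⁻¹` is entrywise nonnegative
(`isUnit_one_sub`, `inv_one_sub_nonneg`).

*Lower bound.* From `W = X + L - Q L ≥ 0` one gets `-X ≤ L - Q L ≤ L`, and multiplying by `R⁻¹`
one gets `-R⁻¹ X = L - R⁻¹ W ≤ L`. As `L` is nondecreasing, both bounds pass to the running suprema.

*Upper bound.* It suffices to show `R L ≤ M`, that is `L_i(t) ≤ c := M_i(t) + (Q L(t))_i`, and then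
apply `R⁻¹ ≥ 0`. If `L_i(t) > c`, then `W_i(s) > 0` at every `s ≤ t` with `L_i(s) > c`; but the
Stieltjes measure `dL_i` charges `{s ≤ t : L_i(s) > c}` (`measure_superlevel_pos`), which contradicts
the complementarity condition.
-/

open MeasureTheory Filter Topology

/-- Running negative-part processes M(X) and N(X). -/
noncomputable def Mfun {n : ℕ} (X : ℝ → Fin n → ℝ) (t : ℝ) : Fin n → ℝ :=
  fun i => sSup ((fun s => max (-(X s i)) 0) '' Set.Icc 0 t)

noncomputable def Nfun {n : ℕ} (Rinv : Matrix (Fin n) (Fin n) ℝ)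
    (X : ℝ → Fin n → ℝ) (t : ℝ) : Fin n → ℝ :=
  fun i => sSup ((fun s => max (-(Rinv.mulVec (X s) i)) 0) '' Set.Icc 0 t)

/-- An increasing function that crosses the level `c` before time `t` has positive Stieltjes mass
on the times up to `t` at which it is above `c`. -/
lemma measure_superlevel_pos (f : StieltjesFunction ℝ) {x₀ t c : ℝ} (h0 : f x₀ ≤ c)
    (ht : c < f t) : 0 < f.measure {s | s ≤ t ∧ c < f s} := by
  have hlow : ∀ s, c < f s → x₀ ≤ s := fun s hs => by
    by_contra! hlt
    exact absurd (f.mono hlt.le) (by linarith)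
  have hbdd : BddBelow {s | c < f s} := ⟨x₀, fun s hs => hlow s hs⟩
  set a := sInf {s | c < f s} with ha
  have hbelow : ∀ s, s < a → f s ≤ c := fun s hs => by
    by_contra! hlt
    exact absurd (csInf_le hbdd hlt) (not_le.2 hs)
  have habove : ∀ s, a < s → c < f s := fun s hs => by
    obtain ⟨u, hu, hus⟩ := exists_lt_of_csInf_lt ⟨t, ht⟩ hs
    exact lt_of_lt_of_le hu (f.mono hus.le)
  -- The superlevel set contains `[a, t]` or `(a, t]`, according to whether the level is
  -- crossed by a jump at `a`.
  by_cases hfa : c < f a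
  · have hsub : Set.Icc a t ⊆ {s | s ≤ t ∧ c < f s} := fun s hs =>
      ⟨hs.2, lt_of_lt_of_le hfa (f.mono hs.1)⟩
    refine lt_of_lt_of_le ?_ (measure_mono hsub)
    rw [StieltjesFunction.measure_Icc, ENNReal.ofReal_pos, sub_pos]
    refine lt_of_le_of_lt ?_ ht
    refine le_of_tendsto (f.mono.tendsto_leftLim a) ?_
    filter_upwards [self_mem_nhdsWithin] with s hs using hbelow s hs
  · have hsub : Set.Ioc a t ⊆ {s | s ≤ t ∧ c < f s} := fun s hs => ⟨hs.2, habove s hs.1⟩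
    refine lt_of_lt_of_le ?_ (measure_mono hsub)
    rw [StieltjesFunction.measure_Ioc, ENNReal.ofReal_pos, sub_pos]
    exact lt_of_le_of_lt (not_lt.1 hfa) ht

lemma isUnit_one_sub {n : ℕ} {Q : Matrix (Fin n) (Fin n) ℝ}
    (hQ : Tendsto (fun k : ℕ => Q ^ k) atTop (𝓝 0)) : IsUnit (1 - Q).det := by
  rw [isUnit_iff_ne_zero]
  intro hdet
  obtain ⟨v, hv, hv0⟩ := Matrix.exists_mulVec_eq_zero_iff.2 hdet
  have hfix : Q.mulVec v = v := by
    rw [Matrix.sub_mulVec, Matrix.one_mulVec, sub_eq_zero] at hv0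
    exact hv0.symm
  have hpow : ∀ k : ℕ, (Q ^ k).mulVec v = v := fun k => by
    induction k with
    | zero => simp
    | succ k ih => rw [pow_succ, ← Matrix.mulVec_mulVec, hfix, ih]
  have hlim : Tendsto (fun k : ℕ => (Q ^ k).mulVec v) atTop
      (𝓝 ((0 : Matrix (Fin n) (Fin n) ℝ).mulVec v)) :=
    ((continuous_id.matrix_mulVec continuous_const).tendsto _).comp hQ
  simp only [hpow, Matrix.zero_mulVec] at hlim
  exact hv (tendsto_nhds_unique tendsto_const_nhds hlim)

lemma inv_one_sub_nonneg {n : ℕ} {Q : Matrix (Fin n) (Fin n) ℝ} (hQ0 : ∀ i j, 0 ≤ Q i j)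
    (hQ : Tendsto (fun k : ℕ => Q ^ k) atTop (𝓝 0)) (i j : Fin n) : 0 ≤ (1 - Q)⁻¹ i j := by
  have hpow : ∀ (k : ℕ) (i j : Fin n), 0 ≤ (Q ^ k) i j := fun k => by
    induction k with
    | zero => intro i j; rw [pow_zero, Matrix.one_apply]; split_ifs <;> norm_num
    | succ k ih =>
      intro i j
      rw [pow_succ, Matrix.mul_apply]
      exact Finset.sum_nonneg fun l _ => mul_nonneg (ih i l) (hQ0 l j)
  have hsum : ∀ k : ℕ, (1 - Q ^ k) * (1 - Q)⁻¹ = ∑ l ∈ Finset.range k, Q ^ l := fun k => by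
    rw [← geom_sum_mul_neg, mul_assoc, Matrix.mul_nonsing_inv _ (isUnit_one_sub hQ), mul_one]
  have hlim : Tendsto (fun k : ℕ => (1 - Q ^ k) * (1 - Q)⁻¹) atTop (𝓝 (1 - Q)⁻¹) := by
    simpa using (tendsto_const_nhds (x := (1 : Matrix (Fin n) (Fin n) ℝ))).sub hQ |>.mul_const _
  have hlim' := tendsto_pi_nhds.1 (tendsto_pi_nhds.1 hlim i) j
  refine ge_of_tendsto' hlim' fun k => ?_
  rw [hsum, Matrix.sum_apply]
  exact Finset.sum_nonneg fun l _ => hpow l i j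

lemma mulVec_mono_of_nonneg {n : ℕ} {A : Matrix (Fin n) (Fin n) ℝ} (hA : ∀ i j, 0 ≤ A i j)
    {v w : Fin n → ℝ} (hvw : ∀ j, v j ≤ w j) (i : Fin n) : A.mulVec v i ≤ A.mulVec w i := by
  simp only [Matrix.mulVec, dotProduct]
  exact Finset.sum_le_sum fun j _ => mul_le_mul_of_nonneg_left (hvw j) (hA i j)

lemma mulVec_nonneg_of_nonneg {n : ℕ} {A : Matrix (Fin n) (Fin n) ℝ} (hA : ∀ i j, 0 ≤ A i j)
    {v : Fin n → ℝ} (hv : ∀ j, 0 ≤ v j) (i : Fin n) : 0 ≤ A.mulVec v i := by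
  simpa using mulVec_mono_of_nonneg hA (v := 0) hv i

lemma monotone_extZero {f : ℝ → ℝ} (h0 : ∀ t, 0 ≤ t → 0 ≤ f t)
    (hf : MonotoneOn f (Set.Ici 0)) : Monotone (extZero f) := by
  intro s t hst
  unfold extZero
  split_ifs with h1 h2 h2
  · exact le_rfl
  · exact h0 t (not_lt.1 h2)
  · linarith
  · exact hf (not_lt.1 h1) (not_lt.1 h2) hst

lemma extZero_rightContinuous {f : ℝ → ℝ}
    (hf : ∀ t, 0 ≤ t → ContinuousWithinAt f (Set.Ici t) t) (x : ℝ) :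
    ContinuousWithinAt (extZero f) (Set.Ici x) x := by
  rcases lt_or_ge x 0 with hx | hx
  · refine (continuousAt_const (y := (0 : ℝ))).congr ?_ |>.continuousWithinAt
    filter_upwards [Iio_mem_nhds hx] with s hs
    exact (if_pos hs).symm
  · refine (hf x hx).congr (fun s hs => if_neg (not_lt.2 (hx.trans hs))) (if_neg (not_lt.2 hx))

/-- Coordinatewise, `R L ≤ M`: beyond the level `M_i + (Q L)_i` the regulator `L_i` would have to
increase while `W_i > 0`. -/
lemma regulator_le {n : ℕ} {Q : Matrix (Fin n) (Fin n) ℝ} (hQ0 : ∀ i j, 0 ≤ Q i j)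
    {X W L : ℝ → Fin n → ℝ} (h : IsSolutionPair (1 - Q) X W L) {t : ℝ} (ht : 0 ≤ t)
    (i : Fin n) {m : ℝ} (hm0 : 0 ≤ m) (hm : ∀ s, 0 ≤ s → s ≤ t → -(X s i) ≤ m) :
    L t i ≤ m + Q.mulVec (L t) i := by
  by_contra! hlt
  set c := m + Q.mulVec (L t) i with hc
  have hQL : 0 ≤ Q.mulVec (L t) i :=
    mulVec_nonneg_of_nonneg hQ0 (fun j => h.nonnegL j t ht) i
  have hc0 : 0 ≤ c := add_nonneg hm0 hQL
  have hmono := monotone_extZero (h.nonnegL i) (h.monoL i)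
  have hrc := extZero_rightContinuous (h.rcL i)
  have hpos := measure_superlevel_pos ⟨_, hmono, hrc⟩ (x₀ := -1) (t := t) (c := c)
    (by simpa [extZero] using hc0) (by simpa [extZero, not_lt.2 ht] using hlt)
  have hflat := h.flat i
  rw [lsMeasure, dif_pos ⟨hmono, hrc⟩] at hflat
  refine hpos.ne' (measure_mono_null ?_ hflat)
  rintro s ⟨hst, hs⟩
  have hs0 : 0 ≤ s := by
    by_contra! hneg
    have : extZero (fun t => L t i) s = 0 := if_pos hneg
    exact absurd (lt_of_lt_of_eq hs this) (not_lt.2 hc0)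
  have hLs : c < L s i := lt_of_lt_of_eq hs (if_neg (not_lt.2 hs0))
  refine ⟨hs0, ?_⟩
  have heq := congrFun (h.eqn s hs0) i
  rw [Matrix.sub_mulVec, Matrix.one_mulVec] at heq
  simp only [Pi.add_apply, Pi.sub_apply] at heq
  have h1 := hm s hs0 hst
  have h2 := mulVec_mono_of_nonneg hQ0 (fun j => h.monoL j hs0 ht hst) i
  change Q.mulVec (L s) i ≤ Q.mulVec (L t) i at h2
  linarith

/-- max(M_i(X)(t), N_i(X)(t)) ≤ L_i(t) ≤ (R⁻¹ M(X)(t))_i for all i and t ≥ 0. -/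
theorem skorohod_regulator_two_sided_bounds
    {n : ℕ} (hn : 0 < n) (P : Matrix (Fin n) (Fin n) ℝ)
    (hPnonneg : ∀ i j, 0 ≤ P i j)
    (hPpow : Filter.Tendsto (fun k : ℕ => P ^ k) Filter.atTop (nhds 0))
    (X W L : ℝ → Fin n → ℝ) (hX : Cadlag X)
    (h : IsSolutionPair (1 - P.transpose) X W L) :
    ∀ (i : Fin n) (t : ℝ), 0 ≤ t →
      max (Mfun X t i) (Nfun (1 - P.transpose)⁻¹ X t i) ≤ L t i ∧
      L t i ≤ (1 - P.transpose)⁻¹.mulVec (Mfun X t) i := by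
  have hQ0 : ∀ i j, 0 ≤ P.transpose i j := fun i j => hPnonneg j i
  have hQ : Tendsto (fun k : ℕ => P.transpose ^ k) atTop (𝓝 0) := by
    have := (continuous_id.matrix_transpose.tendsto (0 : Matrix (Fin n) (Fin n) ℝ)).comp hPpow
    simpa [Function.comp_def, Matrix.transpose_pow] using this
  generalize P.transpose = Q at h hQ0 hQ
  have hunit := isUnit_one_sub hQ
  have hinv := inv_one_sub_nonneg hQ0 hQ
  intro i t ht
  have hXle : ∀ j s, 0 ≤ s → s ≤ t → max (-(X s j)) 0 ≤ L t j := by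
    intro j s hs hst
    refine max_le ?_ (h.nonnegL j t ht)
    have heq := congrFun (h.eqn s hs) j
    rw [Matrix.sub_mulVec, Matrix.one_mulVec] at heq
    simp only [Pi.add_apply, Pi.sub_apply] at heq
    have hQL : 0 ≤ Q.mulVec (L s) j :=
      mulVec_nonneg_of_nonneg hQ0 (fun l => h.nonnegL l s hs) j
    have h1 := h.nonnegW j s hs
    have h2 : L s j ≤ L t j := h.monoL j hs ht hst
    linarith
  -- This bound is what makes the real-valued supremum in `Mfun` a genuine one.
  have hbdd : ∀ j, BddAbove ((fun s => max (-(X s j)) 0) '' Set.Icc 0 t) := fun j =>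
    ⟨L t j, by rintro _ ⟨s, hs, rfl⟩; exact hXle j s hs.1 hs.2⟩
  have hne : (Set.Icc 0 t).Nonempty := ⟨0, le_rfl, ht⟩
  refine ⟨max_le ?_ ?_, ?_⟩
  · refine csSup_le (hne.image _) ?_
    rintro _ ⟨s, hs, rfl⟩
    exact hXle i s hs.1 hs.2
  · refine csSup_le (hne.image _) ?_
    rintro _ ⟨s, hs, rfl⟩
    refine max_le ?_ (h.nonnegL i t ht)
    have heq := congrFun (congrArg ((1 - Q)⁻¹.mulVec) (h.eqn s hs.1)) i
    rw [Matrix.mulVec_add, Matrix.mulVec_mulVec, Matrix.nonsing_inv_mul _ hunit,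
      Matrix.one_mulVec, Pi.add_apply] at heq
    have h1 : 0 ≤ (1 - Q)⁻¹.mulVec (W s) i :=
      mulVec_nonneg_of_nonneg hinv (fun l => h.nonnegW l s hs.1) i
    have h2 : L s i ≤ L t i := h.monoL i hs.1 ht hs.2
    linarith
  · have hRL : ∀ j, (1 - Q).mulVec (L t) j ≤ Mfun X t j := by
      intro j
      have hle : ∀ s, 0 ≤ s → s ≤ t → max (-(X s j)) 0 ≤ Mfun X t j := fun s hs hst =>
        le_csSup (hbdd j) ⟨s, ⟨hs, hst⟩, rfl⟩
      have := regulator_le hQ0 h ht j ((le_max_right _ _).trans (hle 0 le_rfl ht))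
        fun s hs hst => (le_max_left _ _).trans (hle s hs hst)
      rw [Matrix.sub_mulVec, Matrix.one_mulVec, Pi.sub_apply]
      linarith
    have := mulVec_mono_of_nonneg hinv hRL i
    rwa [Matrix.mulVec_mulVec, Matrix.nonsing_inv_mul _ hunit, Matrix.one_mulVec] at this
end
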